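/- Let c₀, c₁, c₂ : ℝ → ℝ and let x₁, x₂, x₃ : ℝ → ℝ be differentiable solutions of the Riccati equation y'(t) = c₀(t) + c₁(t)·y(t) + c₂(t)·y(t)². Let k ∈ ℝ be a constant such that (x₃(t) − x₂(t)) + k·(x₁(t) − x₃(t)) ≠ 0 for all t ∈ ℝ. Then the function x(t) = (x₁(t)·(x₃(t) − x₂(t)) + k·x₂(t)·(x₁(t) − x₃(t))) / ((x₃(t) − x₂(t)) + k·(x₁(t) − x₃(t))) is differentiable and is also a solution of the same Riccati equation. -/

import Mathlib

/-!
A Riccati equation is the projection of a linear planar system: if `u' = (l + c₁) u + c₀ v` and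
`v' = l v - c₂ u`, then `u / v` solves `y' = c₀ + c₁ y + c₂ y²`, whatever the function `l`.
For three solutions `x₁, x₂, x₃`, the pairs `(x₁ (x₃ - x₂), x₃ - x₂)` and
`(x₂ (x₁ - x₃), x₁ - x₃)` solve this system with the same `l = c₁ + c₂ (x₁ + x₂ + x₃)`, so the
superposition formula is the linear superposition principle.
-/

section Riccati

variable {𝕜 𝕜' : Type*} [NontriviallyNormedField 𝕜] [NontriviallyNormedField 𝕜']
  [NormedAlgebra 𝕜 𝕜']

/-- `y` solves the Riccati equation `y' = c₀ + c₁ y + c₂ y²` on `s`, where the derivative at a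
point of `s` is taken within `s`. -/
def IsRiccatiSolutionOn (c₀ c₁ c₂ y : 𝕜 → 𝕜') (s : Set 𝕜) : Prop :=
  ∀ t ∈ s, HasDerivWithinAt y (c₀ t + c₁ t * y t + c₂ t * y t ^ 2) s t

/-- `(u, v)` solves on `s` the linear system lifting the Riccati equation with coefficients
`c₀`, `c₁`, `c₂` from the affine coordinate `u / v` to homogeneous coordinates. The function `l`
is the freedom of rescaling `u` and `v` by a common factor. -/
structure IsRiccatiLiftOn (c₀ c₁ c₂ l u v : 𝕜 → 𝕜') (s : Set 𝕜) : Prop where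
  hasDerivWithinAt_num : ∀ t ∈ s, HasDerivWithinAt u ((l t + c₁ t) * u t + c₀ t * v t) s t
  hasDerivWithinAt_den : ∀ t ∈ s, HasDerivWithinAt v (l t * v t - c₂ t * u t) s t

variable {c₀ c₁ c₂ l u v u₁ v₁ u₂ v₂ x y : 𝕜 → 𝕜'} {s : Set 𝕜}

namespace IsRiccatiLiftOn

theorem add (h₁ : IsRiccatiLiftOn c₀ c₁ c₂ l u₁ v₁ s) (h₂ : IsRiccatiLiftOn c₀ c₁ c₂ l u₂ v₂ s) :
    IsRiccatiLiftOn c₀ c₁ c₂ l (u₁ + u₂) (v₁ + v₂) s where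
  hasDerivWithinAt_num t ht :=
    ((h₁.hasDerivWithinAt_num t ht).add (h₂.hasDerivWithinAt_num t ht)).congr_deriv <| by
      simp only [Pi.add_apply]; ring
  hasDerivWithinAt_den t ht :=
    ((h₁.hasDerivWithinAt_den t ht).add (h₂.hasDerivWithinAt_den t ht)).congr_deriv <| by
      simp only [Pi.add_apply]; ring

theorem const_smul (h : IsRiccatiLiftOn c₀ c₁ c₂ l u v s) (k : 𝕜') :
    IsRiccatiLiftOn c₀ c₁ c₂ l (k • u) (k • v) s where
  hasDerivWithinAt_num t ht :=
    ((h.hasDerivWithinAt_num t ht).const_smul k).congr_deriv <| by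
      simp only [Pi.smul_apply, smul_eq_mul]; ring
  hasDerivWithinAt_den t ht :=
    ((h.hasDerivWithinAt_den t ht).const_smul k).congr_deriv <| by
      simp only [Pi.smul_apply, smul_eq_mul]; ring

theorem isRiccatiSolutionOn_div (h : IsRiccatiLiftOn c₀ c₁ c₂ l u v s) (hv : ∀ t ∈ s, v t ≠ 0) :
    IsRiccatiSolutionOn c₀ c₁ c₂ (u / v) s := by
  intro t ht
  have hvt := hv t ht
  refine ((h.hasDerivWithinAt_num t ht).div (h.hasDerivWithinAt_den t ht) hvt).congr_deriv ?_
  simp only [Pi.div_apply]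
  field_simp
  ring

end IsRiccatiLiftOn

theorem isRiccatiSolutionOn_univ :
    IsRiccatiSolutionOn c₀ c₁ c₂ y Set.univ ↔
      ∀ t, HasDerivAt y (c₀ t + c₁ t * y t + c₂ t * y t ^ 2) t := by
  simp only [IsRiccatiSolutionOn, Set.mem_univ, true_imp_iff, hasDerivWithinAt_univ]

namespace IsRiccatiSolutionOn

theorem hasDerivWithinAt_sub (hx : IsRiccatiSolutionOn c₀ c₁ c₂ x s)
    (hy : IsRiccatiSolutionOn c₀ c₁ c₂ y s) {t : 𝕜} (ht : t ∈ s) :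
    HasDerivWithinAt (x - y) ((c₁ t + c₂ t * (x t + y t)) * (x t - y t)) s t :=
  ((hx t ht).sub (hy t ht)).congr_deriv <| by ring

theorem isRiccatiLiftOn_mul (hx : IsRiccatiSolutionOn c₀ c₁ c₂ x s)
    (hv : ∀ t ∈ s, HasDerivWithinAt v ((l t - c₂ t * x t) * v t) s t) :
    IsRiccatiLiftOn c₀ c₁ c₂ l (x * v) v s where
  hasDerivWithinAt_num t ht :=
    ((hx t ht).mul (hv t ht)).congr_deriv <| by simp only [Pi.mul_apply]; ring
  hasDerivWithinAt_den t ht :=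
    (hv t ht).congr_deriv <| by simp only [Pi.mul_apply]; ring

end IsRiccatiSolutionOn

theorem riccati_superposition_formula_general {x₁ x₂ x₃ : 𝕜 → 𝕜'}
    (hx₁ : IsRiccatiSolutionOn c₀ c₁ c₂ x₁ s) (hx₂ : IsRiccatiSolutionOn c₀ c₁ c₂ x₂ s)
    (hx₃ : IsRiccatiSolutionOn c₀ c₁ c₂ x₃ s) (k : 𝕜')
    (hD : ∀ t ∈ s, (x₃ t - x₂ t) + k * (x₁ t - x₃ t) ≠ 0) :
    IsRiccatiSolutionOn c₀ c₁ c₂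
      (fun t ↦ (x₁ t * (x₃ t - x₂ t) + k * x₂ t * (x₁ t - x₃ t)) /
        ((x₃ t - x₂ t) + k * (x₁ t - x₃ t))) s := by
  let l : 𝕜 → 𝕜' := c₁ + c₂ * (x₁ + x₂ + x₃)
  have lift₁ : IsRiccatiLiftOn c₀ c₁ c₂ l (x₁ * (x₃ - x₂)) (x₃ - x₂) s :=
    hx₁.isRiccatiLiftOn_mul fun t ht ↦ (hx₃.hasDerivWithinAt_sub hx₂ ht).congr_deriv <| by
      simp only [l, Pi.add_apply, Pi.mul_apply, Pi.sub_apply]; ring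
  have lift₂ : IsRiccatiLiftOn c₀ c₁ c₂ l (x₂ * (x₁ - x₃)) (x₁ - x₃) s :=
    hx₂.isRiccatiLiftOn_mul fun t ht ↦ (hx₁.hasDerivWithinAt_sub hx₃ ht).congr_deriv <| by
      simp only [l, Pi.add_apply, Pi.mul_apply, Pi.sub_apply]; ring
  simp only [mul_assoc]
  exact (lift₁.add (lift₂.const_smul k)).isRiccatiSolutionOn_div hD

end Riccati

/-- The superposition formula for the Riccati equation: the combination of three
solutions with constant `k` is again a (differentiable) solution. -/
theorem riccati_superposition_formula
    (c₀ c₁ c₂ : ℝ → ℝ) (x₁ x₂ x₃ : ℝ → ℝ)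
    (hx₁ : ∀ t, HasDerivAt x₁ (c₀ t + c₁ t * x₁ t + c₂ t * (x₁ t) ^ 2) t)
    (hx₂ : ∀ t, HasDerivAt x₂ (c₀ t + c₁ t * x₂ t + c₂ t * (x₂ t) ^ 2) t)
    (hx₃ : ∀ t, HasDerivAt x₃ (c₀ t + c₁ t * x₃ t + c₂ t * (x₃ t) ^ 2) t)
    (k : ℝ)
    (hD : ∀ t, (x₃ t - x₂ t) + k * (x₁ t - x₃ t) ≠ 0)
    (x : ℝ → ℝ)
    (hxdef : ∀ t, x t =
      (x₁ t * (x₃ t - x₂ t) + k * x₂ t * (x₁ t - x₃ t)) /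
        ((x₃ t - x₂ t) + k * (x₁ t - x₃ t))) :
    ∀ t, HasDerivAt x (c₀ t + c₁ t * x t + c₂ t * (x t) ^ 2) t := by
  obtain rfl := funext hxdef
  rw [← isRiccatiSolutionOn_univ] at hx₁ hx₂ hx₃ ⊢
  exact riccati_superposition_formula_general hx₁ hx₂ hx₃ k fun t _ ↦ hD t
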